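/- (Antisymmetry of the extension (A.15).) Fix real constants c, k0, k1, k2 and a loop q. For smooth vector fields ξ, η with admissible components, define ⟨∂²f⟩(t) := q̇^ρ(t) q̇^σ(t)(∂_ρ∂_σ f)(q(t)) for admissible f, and set ext(ξ,η) = (1/2πi) ∫_0^{2π} { (1+k1) (d/dt)[(∂_ν ξ^μ)(q(t))] (∂_μ η^ν)(q(t)) + k2 (d/dt)[(∂_μ ξ^μ)(q(t))] (∂_ν η^ν)(q(t)) + (∂_ν ξ^0)(q(t)) ⟨∂²η^ν⟩(t) − ⟨∂²ξ^μ⟩(t) (∂_μ η^0)(q(t)) − (d/dt)[ξ^0(q(t))] ⟨∂²η^0⟩(t) + ⟨∂²ξ^0⟩(t) (d/dt)[η^0(q(t))] + ((1+k0)/2)( (d/dt)[(∂_μ ξ^μ)(q(t))] (d/dt)[η^0(q(t))] − (d/dt)[ξ^0(q(t))] (d/dt)[(∂_ν η^ν)(q(t))] ) − (2 − (c+2(N−1))/12) (d²/dt²)[ξ^0(q(t))] (d/dt)[η^0(q(t))] − ((c+2(N−1))/12) (d/dt)[ξ^0(q(t))] η^0(q(t)) + (i/2)( (∂_μ ξ^μ)(q(t))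 (d/dt)[η^0(q(t))] − (d/dt)[ξ^0(q(t))] (∂_ν η^ν)(q(t)) ) } dt, with repeated indices summed over 0,…,N−1. Then for all such ξ, η: ext(η,ξ) = −ext(ξ,η). -/

import Mathlib

open Finset Real

/-- Partial derivative `∂_μ f` of a function on `ℝ^N = (Fin N → ℝ)`. -/
noncomputable def pd {N : ℕ} (f : (Fin N → ℝ) → ℝ) (μ : Fin N) (x : Fin N → ℝ) : ℝ :=
  fderiv ℝ f x (Pi.single μ 1)

/-- Second partial derivative `∂_μ ∂_ν f`. -/
noncomputable def pd2 {N : ℕ} (f : (Fin N → ℝ) → ℝ) (μ ν : Fin N) (x : Fin N → ℝ) : ℝ :=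
  pd (fun y => pd f ν y) μ x

/-- A function on `ℝ^N` is admissible if it is smooth and `2π`-periodic in `x^0`. -/
def Admissible {N : ℕ} [NeZero N] (f : (Fin N → ℝ) → ℝ) : Prop :=
  ContDiff ℝ (⊤ : ℕ∞) f ∧ ∀ x, f (x + Pi.single 0 (2 * π)) = f x

/-- A loop is a smooth map `q : ℝ → ℝ^N` with `q^0(t) = t` and each spatial
component `2π`-periodic. -/
def IsLoop {N : ℕ} [NeZero N] (q : ℝ → Fin N → ℝ) : Prop :=
  ContDiff ℝ (⊤ : ℕ∞) q ∧ (∀ t, q t 0 = t) ∧ ∀ t, ∀ i ≠ (0 : Fin N), q (t + 2 * π) i = q t i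

/-- The contraction `⟨∂²f⟩(t) = q̇^ρ(t) q̇^σ(t) (∂_ρ∂_σ f)(q(t))`. -/
noncomputable def contr2 {N : ℕ} (q : ℝ → Fin N → ℝ) (f : (Fin N → ℝ) → ℝ) (t : ℝ) : ℝ :=
  ∑ ρ, ∑ σ, deriv (fun s => q s ρ) t * deriv (fun s => q s σ) t * pd2 f ρ σ (q t)

/-- The extension (A.15) of Theorem 3.1:
`ext(ξ,η) = (1/2πi) ∫₀^{2π} { (1+k₁) ∂_ν ξ̇^μ ∂_μ η^ν + k₂ ∂_μ ξ̇^μ ∂_ν η^ν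
  + ∂_ν ξ^0 ⟨∂²η^ν⟩ − ⟨∂²ξ^μ⟩ ∂_μ η^0 − ξ̇^0 ⟨∂²η^0⟩ + ⟨∂²ξ^0⟩ η̇^0
  + ((1+k₀)/2)(∂_μ ξ̇^μ η̇^0 − ξ̇^0 ∂_ν η̇^ν) − (2 − (c+2(N−1))/12) ξ̈^0 η̇^0
  − ((c+2(N−1))/12) ξ̇^0 η^0 + (i/2)(∂_μ ξ^μ η̇^0 − ξ̇^0 ∂_ν η^ν) } dt`. -/
noncomputable def extform (N : ℕ) [NeZero N] (c k0 k1 k2 : ℝ) (q : ℝ → Fin N → ℝ)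
    (ξ η : Fin N → (Fin N → ℝ) → ℝ) : ℂ :=
  (1 / (2 * π * Complex.I)) *
    ∫ t in (0:ℝ)..(2 * π),
      (((1 + k1) * ∑ μ, ∑ ν, deriv (fun s => pd (ξ μ) ν (q s)) t * pd (η ν) μ (q t)
        + k2 * deriv (fun s => ∑ μ, pd (ξ μ) μ (q s)) t * ∑ ν, pd (η ν) ν (q t)
        + (∑ ν, pd (ξ 0) ν (q t) * contr2 q (η ν) t)
        - (∑ μ, contr2 q (ξ μ) t * pd (η 0) μ (q t))
        - deriv (fun s => ξ 0 (q s)) t * contr2 q (η 0) t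
        + contr2 q (ξ 0) t * deriv (fun s => η 0 (q s)) t
        + ((1 + k0) / 2) *
            (deriv (fun s => ∑ μ, pd (ξ μ) μ (q s)) t * deriv (fun s => η 0 (q s)) t
              - deriv (fun s => ξ 0 (q s)) t * deriv (fun s => ∑ ν, pd (η ν) ν (q s)) t)
        - (2 - (c + 2 * ((N : ℝ) - 1)) / 12) *
            deriv (deriv (fun s => ξ 0 (q s))) t * deriv (fun s => η 0 (q s)) t
        - ((c + 2 * ((N : ℝ) - 1)) / 12) *
            deriv (fun s => ξ 0 (q s)) t * η 0 (q t) : ℝ) : ℂ)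
      + (Complex.I / 2) *
          (((∑ μ, pd (ξ μ) μ (q t)) * deriv (fun s => η 0 (q s)) t
            - deriv (fun s => ξ 0 (q s)) t * ∑ ν, pd (η ν) ν (q t) : ℝ) : ℂ)

/-- The real part of the integrand of `extform`, written in terms of the pullbacks to the loop
`A μ ν = ∂_ν ξ^μ`, `x = ξ^0`, `P μ = ⟨∂²ξ^μ⟩` and likewise `B`, `y`, `Q` for `η`. -/
noncomputable def loopRe {N : ℕ} [NeZero N] (a b d e g : ℝ) (A B : Fin N → Fin N → ℝ → ℝ)
    (x y : ℝ → ℝ) (P Q : Fin N → ℝ → ℝ) (t : ℝ) : ℝ :=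
  a * ∑ μ, ∑ ν, deriv (A μ ν) t * B ν μ t
    + b * deriv (fun s => ∑ μ, A μ μ s) t * ∑ ν, B ν ν t
    + (∑ ν, A 0 ν t * Q ν t)
    - (∑ μ, P μ t * B 0 μ t)
    - deriv x t * Q 0 t
    + P 0 t * deriv y t
    + d * (deriv (fun s => ∑ μ, A μ μ s) t * deriv y t
        - deriv x t * deriv (fun s => ∑ ν, B ν ν s) t)
    - e * deriv (deriv x) t * deriv y t
    - g * deriv x t * y t

/-- The imaginary part of the integrand of `extform`, up to the factor `1/2`. -/
noncomputable def loopIm {N : ℕ} (A B : Fin N → Fin N → ℝ → ℝ) (x y : ℝ → ℝ) (t : ℝ) : ℝ :=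
  (∑ μ, A μ μ t) * deriv y t - deriv x t * ∑ ν, B ν ν t

/-- A primitive of the symmetric part of `loopRe`. -/
noncomputable def loopPrimitive {N : ℕ} (a b e g : ℝ) (A B : Fin N → Fin N → ℝ → ℝ)
    (x y : ℝ → ℝ) (t : ℝ) : ℝ :=
  a * (∑ μ, ∑ ν, A μ ν t * B ν μ t) + b * ((∑ μ, A μ μ t) * ∑ ν, B ν ν t)
    - e * (deriv x t * deriv y t) - g * (x t * y t)

lemma contDiff_deriv_of_smooth {f : ℝ → ℝ} (hf : ContDiff ℝ (⊤ : ℕ∞) f) :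
    ContDiff ℝ (⊤ : ℕ∞) (deriv f) :=
  (contDiff_infty_iff_deriv.1 hf).2

lemma deriv_add_period {f : ℝ → ℝ} {T : ℝ} (hf : ∀ t, f (t + T) = f t) (t : ℝ) :
    deriv f (t + T) = deriv f t := by
  rw [← deriv_comp_add_const, funext hf]

lemma hasDerivAt_loopPrimitive {N : ℕ} [NeZero N] {A B : Fin N → Fin N → ℝ → ℝ} {x y : ℝ → ℝ}
    (hA : ∀ μ ν, ContDiff ℝ (⊤ : ℕ∞) (A μ ν)) (hB : ∀ μ ν, ContDiff ℝ (⊤ : ℕ∞) (B μ ν))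
    (hx : ContDiff ℝ (⊤ : ℕ∞) x) (hy : ContDiff ℝ (⊤ : ℕ∞) y)
    (a b d e g : ℝ) (P Q : Fin N → ℝ → ℝ) (t : ℝ) :
    HasDerivAt (loopPrimitive a b e g A B x y)
      (loopRe a b d e g A B x y P Q t + loopRe a b d e g B A y x Q P t) t := by
  have der : ∀ {f : ℝ → ℝ}, ContDiff ℝ (⊤ : ℕ∞) f → HasDerivAt f (deriv f t) t := fun hf =>
    (hf.differentiable (by simp) t).hasDerivAt
  have trA := der (ContDiff.sum (s := Finset.univ) fun μ _ => hA μ μ)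
  have trB := der (ContDiff.sum (s := Finset.univ) fun μ _ => hB μ μ)
  have quad : HasDerivAt (fun s => ∑ μ, ∑ ν, A μ ν s * B ν μ s)
      (∑ μ, ∑ ν, (deriv (A μ ν) t * B ν μ t + A μ ν t * deriv (B ν μ) t)) t :=
    HasDerivAt.fun_sum fun μ _ => HasDerivAt.fun_sum fun ν _ =>
      (der (hA μ ν)).fun_mul (der (hB ν μ))
  have total := (((quad.const_mul a).fun_add ((trA.fun_mul trB).const_mul b)).fun_sub
    (((der (contDiff_deriv_of_smooth hx)).fun_mul
      (der (contDiff_deriv_of_smooth hy))).const_mul e)).fun_sub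
    (((der hx).fun_mul (der hy)).const_mul g)
  refine total.congr_deriv ?_
  have swap : ∑ μ, ∑ ν, A μ ν t * deriv (B ν μ) t = ∑ μ, ∑ ν, deriv (B μ ν) t * A ν μ t := by
    rw [Finset.sum_comm]
    simp only [mul_comm]
  have cQ : ∑ ν, A 0 ν t * Q ν t = ∑ ν, Q ν t * A 0 ν t := by simp only [mul_comm]
  have cP : ∑ ν, B 0 ν t * P ν t = ∑ ν, P ν t * B 0 ν t := by simp only [mul_comm]
  simp only [Finset.sum_add_distrib, swap, loopRe, cQ, cP]
  ring

lemma continuous_loopRe {N : ℕ} [NeZero N] {A B : Fin N → Fin N → ℝ → ℝ} {x y : ℝ → ℝ}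
    (hA : ∀ μ ν, ContDiff ℝ (⊤ : ℕ∞) (A μ ν)) (hB : ∀ μ ν, ContDiff ℝ (⊤ : ℕ∞) (B μ ν))
    (hx : ContDiff ℝ (⊤ : ℕ∞) x) (hy : ContDiff ℝ (⊤ : ℕ∞) y)
    (a b d e g : ℝ) {P Q : Fin N → ℝ → ℝ}
    (hP : ∀ μ, Continuous (P μ)) (hQ : ∀ μ, Continuous (Q μ)) :
    Continuous (loopRe a b d e g A B x y P Q) := by
  have cA := fun μ ν => (hA μ ν).continuous
  have cB := fun μ ν => (hB μ ν).continuous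
  have cA' := fun μ ν => (contDiff_deriv_of_smooth (hA μ ν)).continuous
  have trA := (contDiff_deriv_of_smooth
    (ContDiff.sum (s := Finset.univ) fun μ _ => hA μ μ)).continuous
  have trB := (contDiff_deriv_of_smooth
    (ContDiff.sum (s := Finset.univ) fun μ _ => hB μ μ)).continuous
  have cx' := contDiff_deriv_of_smooth hx
  have cx'' := (contDiff_deriv_of_smooth cx').continuous
  have cx := cx'.continuous
  have cy' := (contDiff_deriv_of_smooth hy).continuous
  have cy := hy.continuous
  unfold loopRe
  fun_prop

lemma continuous_loopIm {N : ℕ} {A B : Fin N → Fin N → ℝ → ℝ} {x y : ℝ → ℝ}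
    (hA : ∀ μ ν, ContDiff ℝ (⊤ : ℕ∞) (A μ ν)) (hB : ∀ μ ν, ContDiff ℝ (⊤ : ℕ∞) (B μ ν))
    (hx : ContDiff ℝ (⊤ : ℕ∞) x) (hy : ContDiff ℝ (⊤ : ℕ∞) y) :
    Continuous (loopIm A B x y) := by
  have cA := fun μ ν => (hA μ ν).continuous
  have cB := fun μ ν => (hB μ ν).continuous
  have cx := (contDiff_deriv_of_smooth hx).continuous
  have cy := (contDiff_deriv_of_smooth hy).continuous
  unfold loopIm
  fun_prop

/-- Antisymmetry of the loop integral of `loopRe + (i/2) loopIm` for periodic data. -/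
lemma integral_loop_antisymm {N : ℕ} [NeZero N] {A B : Fin N → Fin N → ℝ → ℝ} {x y : ℝ → ℝ}
    (hA : ∀ μ ν, ContDiff ℝ (⊤ : ℕ∞) (A μ ν)) (hB : ∀ μ ν, ContDiff ℝ (⊤ : ℕ∞) (B μ ν))
    (hx : ContDiff ℝ (⊤ : ℕ∞) x) (hy : ContDiff ℝ (⊤ : ℕ∞) y)
    (a b d e g T : ℝ) {P Q : Fin N → ℝ → ℝ}
    (hP : ∀ μ, Continuous (P μ)) (hQ : ∀ μ, Continuous (Q μ))
    (pA : ∀ μ ν t, A μ ν (t + T) = A μ ν t) (pB : ∀ μ ν t, B μ ν (t + T) = B μ ν t)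
    (px : ∀ t, x (t + T) = x t) (py : ∀ t, y (t + T) = y t) :
    ∫ t in (0 : ℝ)..T, ((loopRe a b d e g B A y x Q P t : ℂ)
        + Complex.I / 2 * (loopIm B A y x t : ℂ))
      = -∫ t in (0 : ℝ)..T, ((loopRe a b d e g A B x y P Q t : ℂ)
        + Complex.I / 2 * (loopIm A B x y t : ℂ)) := by
  have c1 := continuous_loopRe hA hB hx hy a b d e g hP hQ
  have c2 := continuous_loopRe hB hA hy hx a b d e g hQ hP
  have c3 := continuous_loopIm hA hB hx hy
  have c4 := continuous_loopIm hB hA hy hx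
  have ftc := intervalIntegral.integral_eq_sub_of_hasDerivAt (a := 0) (b := T)
    (fun t _ => hasDerivAt_loopPrimitive hA hB hx hy a b d e g P Q t)
    ((c1.add c2).intervalIntegrable 0 T)
  have closed : loopPrimitive a b e g A B x y T = loopPrimitive a b e g A B x y 0 := by
    rw [← zero_add T]
    simp only [loopPrimitive, pA, pB, px, py, deriv_add_period px, deriv_add_period py]
  rw [closed, sub_self] at ftc
  rw [eq_neg_iff_add_eq_zero, ← intervalIntegral.integral_add
    (Continuous.intervalIntegrable (by fun_prop) _ _)
    (Continuous.intervalIntegrable (by fun_prop) _ _)]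
  rw [← Complex.ofReal_zero, ← ftc, ← intervalIntegral.integral_ofReal]
  congr 1
  funext t
  simp only [loopIm]
  push_cast
  ring

lemma contDiff_pd {N : ℕ} {f : (Fin N → ℝ) → ℝ} (hf : ContDiff ℝ (⊤ : ℕ∞) f) (μ : Fin N) :
    ContDiff ℝ (⊤ : ℕ∞) (pd f μ) :=
  (hf.fderiv_right (m := (⊤ : ℕ∞)) (by simp)).clm_apply contDiff_const

lemma Admissible.pd {N : ℕ} [NeZero N] {f : (Fin N → ℝ) → ℝ} (hf : Admissible f) (μ : Fin N) :
    Admissible (pd f μ) := by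
  refine ⟨contDiff_pd hf.1 μ, fun x => ?_⟩
  unfold _root_.pd
  rw [← fderiv_comp_add_right, funext hf.2]

lemma IsLoop.add_period {N : ℕ} [NeZero N] {q : ℝ → Fin N → ℝ} (hq : IsLoop q) (t : ℝ) :
    q (t + 2 * π) = q t + Pi.single 0 (2 * π) := by
  funext i
  by_cases hi : i = 0
  · subst hi
    simp [hq.2.1]
  · simp [hq.2.2 t i hi, hi]

lemma Admissible.comp_loop_periodic {N : ℕ} [NeZero N] {f : (Fin N → ℝ) → ℝ} (hf : Admissible f)
    {q : ℝ → Fin N → ℝ} (hq : IsLoop q) (t : ℝ) : f (q (t + 2 * π)) = f (q t) := by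
  rw [hq.add_period, hf.2]

lemma continuous_contr2 {N : ℕ} {q : ℝ → Fin N → ℝ} (hq : ContDiff ℝ (⊤ : ℕ∞) q)
    {f : (Fin N → ℝ) → ℝ} (hf : ContDiff ℝ (⊤ : ℕ∞) f) : Continuous (contr2 q f) := by
  have cq := hq.continuous
  have cq' := fun ρ => (contDiff_deriv_of_smooth (contDiff_pi.1 hq ρ)).continuous
  have cf : ∀ ρ σ, Continuous fun t => pd2 f ρ σ (q t) := fun ρ σ =>
    (contDiff_pd (contDiff_pd hf σ) ρ).continuous.comp cq
  unfold contr2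
  fun_prop

/-- Antisymmetry of the extension (A.15): `ext(η,ξ) = −ext(ξ,η)`. -/
theorem extform_antisymm (N : ℕ) [NeZero N] (c k0 k1 k2 : ℝ)
    (q : ℝ → Fin N → ℝ) (hq : IsLoop q)
    (ξ η : Fin N → (Fin N → ℝ) → ℝ)
    (hξ : ∀ μ, Admissible (ξ μ)) (hη : ∀ μ, Admissible (η μ)) :
    extform N c k0 k1 k2 q η ξ = - extform N c k0 k1 k2 q ξ η := by
  have key := integral_loop_antisymm
    (A := fun μ ν s => pd (ξ μ) ν (q s)) (B := fun μ ν s => pd (η μ) ν (q s))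
    (x := fun s => ξ 0 (q s)) (y := fun s => η 0 (q s))
    (fun μ ν => (contDiff_pd (hξ μ).1 ν).comp hq.1) (fun μ ν => (contDiff_pd (hη μ).1 ν).comp hq.1)
    ((hξ 0).1.comp hq.1) ((hη 0).1.comp hq.1)
    (1 + k1) k2 ((1 + k0) / 2) (2 - (c + 2 * ((N : ℝ) - 1)) / 12) ((c + 2 * ((N : ℝ) - 1)) / 12)
    (2 * π) (P := fun μ => contr2 q (ξ μ)) (Q := fun μ => contr2 q (η μ))
    (fun μ => continuous_contr2 hq.1 (hξ μ).1) (fun μ => continuous_contr2 hq.1 (hη μ).1)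
    (fun μ ν => ((hξ μ).pd ν).comp_loop_periodic hq)
    (fun μ ν => ((hη μ).pd ν).comp_loop_periodic hq)
    ((hξ 0).comp_loop_periodic hq) ((hη 0).comp_loop_periodic hq)
  unfold extform
  rw [← mul_neg]
  exact congrArg _ key
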